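/- arXiv:2202.04722 — 2 statements merged into one kernel-verified Lean document; each statement's English description precedes it below -/
import Mathlib

section
/- Let 0 ≤ α < 1/2, N a positive integer, h = 2π/(2N+1), and let x̃_{−N},…,x̃_N be a set of α-perturbed nodes. Fix −N ≤ j ≤ N, and for −N ≤ k ≤ N set x_k = x̃_j + (k−j)h. Let ℓ_j be the trigonometric Lagrange basis polynomial at x̃_j associated with the nodes. For 1 ≤ d ≤ N, let k₁ ≠ k₂ be the two indices in {−N,…,N}∖{j} with circular distance d(j,k₁) = d(j,k₂) = d. Then |ℓ_j(x_{k₁}) + ℓ_j(x_{k₂})| ≤ (πα/d) · ∏_{m=1}^{N} (m+α)²/((m−2α)m). -/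
open Real Finset

/-- `x` is a set of α-perturbed nodes of size 2N+1. -/
def PerturbedNodes (N : ℕ) (α : ℝ) (x : ℤ → ℝ) : Prop :=
  ∀ j ∈ Finset.Icc (-(N:ℤ)) (N:ℤ),
    |x j - (j : ℝ) * (2*π/(2*N+1))| ≤ α * (2*π/(2*N+1))

/-- The trigonometric Lagrange basis polynomial at the node `x j` associated with the
nodes `x m`, `−N ≤ m ≤ N`. -/
noncomputable def lagrange (N : ℕ) (x : ℤ → ℝ) (j : ℤ) (y : ℝ) : ℝ :=
  ∏ m ∈ (Finset.Icc (-(N:ℤ)) (N:ℤ)).erase j,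
    Real.sin ((y - x m) / 2) / Real.sin ((x j - x m) / 2)

lemma prod_int_Icc_symm (g : ℤ → ℝ) (N : ℕ) :
    ∏ q ∈ Icc (-(N : ℤ)) N, g q = g 0 * ∏ q ∈ Icc 1 N, (g q * g (-q)) := by
  induction N with
  | zero => simp
  | succ N ih =>
    have h : Icc (-((N + 1 : ℕ) : ℤ)) ((N + 1 : ℕ) : ℤ) =
        insert ((N + 1 : ℕ) : ℤ) (insert (-((N + 1 : ℕ) : ℤ)) (Icc (-(N : ℤ)) N)) := by
      ext m
      simp only [mem_Icc, mem_insert]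
      omega
    rw [h, prod_insert (by simp only [mem_insert, mem_Icc]; omega),
      prod_insert (by simp only [mem_Icc]; omega), ih, prod_Icc_succ_top (by omega)]
    ring

lemma prod_range_eq_symm (g : ℤ → ℝ) (N : ℕ) (a : ℤ) :
    ∏ i ∈ range (2 * N + 1), g (a - N + i) =
      g a * ∏ q ∈ Icc 1 N, (g (a + q) * g (a - q)) := by
  induction N with
  | zero => simp
  | succ N ih =>
    rw [show 2 * (N + 1) + 1 = (2 * N + 1) + 1 + 1 by ring, prod_range_succ, prod_range_succ',
      prod_Icc_succ_top (by omega), ← mul_assoc, ← ih]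
    have h : ∀ i ∈ range (2 * N + 1),
        g (a - ((N + 1 : ℕ) : ℤ) + ((i + 1 : ℕ) : ℤ)) = g (a - N + i) := by
      intro i _
      congr 1
      push_cast
      ring
    rw [prod_congr rfl h,
      show a - ((N + 1 : ℕ) : ℤ) + ((2 * N + 1 + 1 : ℕ) : ℤ) = a + ((N + 1 : ℕ) : ℤ) by
        push_cast; ring]
    simp only [Nat.cast_zero, add_zero]
    ring

/-- Moving the window of a product over a full period of an antiperiodic function. -/
lemma prod_Icc_eq_of_antiperiodic (g : ℤ → ℝ) (N : ℕ) (hg : ∀ m, g (m + (2 * N + 1)) = -g m)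
    (a : ℤ) :
    ∏ q ∈ Icc (-(N : ℤ)) N, g q =
      (-1) ^ a * (g a * ∏ q ∈ Icc 1 N, (g (a + q) * g (a - q))) := by
  have step : ∀ b : ℤ, ∏ i ∈ range (2 * N + 1), g (b + 1 - N + i) =
      -∏ i ∈ range (2 * N + 1), g (b - N + i) := by
    intro b
    rw [prod_range_succ, prod_range_succ' (fun i : ℕ => g (b - N + i))]
    have h : b + 1 - N + ((2 * N : ℕ) : ℤ) = (b - N + ((0 : ℕ) : ℤ)) + (2 * N + 1) := by
      push_cast
      ring
    have h' : ∀ i ∈ range (2 * N), g (b + 1 - N + i) = g (b - N + ((i + 1 : ℕ) : ℤ)) := by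
      intro i _
      congr 1
      push_cast
      ring
    rw [h, hg, prod_congr rfl h', mul_neg]
  rw [← prod_range_eq_symm, prod_int_Icc_symm]
  induction a using Int.induction_on with
  | zero =>
    rw [prod_range_eq_symm]
    simp
  | succ i ih =>
    rw [ih, step, zpow_add_one₀ (by norm_num)]
    ring
  | pred i ih =>
    have h := step (-(i : ℤ) - 1)
    rw [sub_add_cancel] at h
    rw [ih, h, zpow_sub_one₀ (by norm_num)]
    norm_num

lemma sin_mul_sin_le_sin_sq {a b c : ℝ} (h0 : 0 ≤ a + b) (h : a + b ≤ 2 * c) (hc : c ≤ π / 2) :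
    sin a * sin b ≤ sin c ^ 2 := by
  have h1 : cos (2 * c) ≤ cos (a + b) := cos_le_cos_of_nonneg_of_le_pi h0 (by linarith) h
  have h2 := cos_le_one (a - b)
  rw [cos_add] at h1
  rw [cos_sub] at h2
  rw [cos_two_mul, cos_sq'] at h1
  linarith

lemma sin_le_sin_of_le_pi_sub {u v : ℝ} (hu : 0 ≤ u) (huv : u ≤ v) (hv : v ≤ π - u) :
    sin u ≤ sin v := by
  rcases le_total v (π / 2) with h | h
  · exact sin_le_sin_of_le_of_le_pi_div_two (by linarith) h huv
  · rw [← sin_pi_sub v]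
    exact sin_le_sin_of_le_of_le_pi_div_two (by linarith) (by linarith) (by linarith)

/-- Two factors moved by a common shift `δ` and by individual perturbations of size at most `α`. -/
lemma sin_mul_sin_ge {m α δ a b : ℝ} (hm : 2 * α ≤ m) (hm' : m + α ≤ π / 2) (hδ : |δ| ≤ α)
    (ha : |a - (m - δ)| ≤ α) (hb : |b - (m + δ)| ≤ α) :
    sin m * sin (m - 2 * α) ≤ sin a * sin b := by
  rw [abs_le] at ha hb
  have hδ' := abs_le.1 hδ
  have h1 : sin (m - δ - α) ≤ sin a :=
    sin_le_sin_of_le_pi_sub (by linarith) (by linarith) (by linarith)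
  have h2 : sin (m + δ - α) ≤ sin b :=
    sin_le_sin_of_le_pi_sub (by linarith) (by linarith) (by linarith)
  have h3 : 0 ≤ sin (m + δ - α) := sin_nonneg_of_nonneg_of_le_pi (by linarith) (by linarith)
  have h4 : 0 ≤ sin (m - δ - α) := sin_nonneg_of_nonneg_of_le_pi (by linarith) (by linarith)
  have h5 : cos (2 * α) ≤ cos (2 * δ) := by
    rw [← cos_abs (2 * δ), abs_mul, abs_two]
    exact cos_le_cos_of_nonneg_of_le_pi (by positivity) (by linarith) (by linarith)
  refine le_trans ?_ (mul_le_mul h1 h2 h3 (h4.trans h1))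
  have e1 : 2 * sin m * sin (m - 2 * α) = cos (2 * α) - cos (2 * m - 2 * α) := by
    rw [two_mul_sin_mul_sin]
    ring_nf
  have e2 : 2 * sin (m - δ - α) * sin (m + δ - α) = cos (2 * δ) - cos (2 * m - 2 * α) := by
    rw [two_mul_sin_mul_sin, ← cos_neg]
    ring_nf
  linarith

lemma mul_sin_le_mul_sin {x y : ℝ} (hx : 0 ≤ x) (hxy : x ≤ y) (hy : y ≤ π) :
    x * sin y ≤ y * sin x := by
  rcases (hx.trans hxy).eq_or_lt with h | h
  · obtain rfl : x = 0 := by linarith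
    simp [← h]
  have hw : 0 ≤ 1 - x / y := by
    rw [sub_nonneg, div_le_one h]
    exact hxy
  have hc := strictConcaveOn_sin_Icc.concaveOn.2 (Set.left_mem_Icc.2 pi_nonneg)
    (Set.mem_Icc.2 ⟨h.le, hy⟩) hw (div_nonneg hx h.le) (by ring)
  simp only [smul_eq_mul, mul_zero, sin_zero, zero_add, div_mul_cancel₀ _ h.ne'] at hc
  have := mul_le_mul_of_nonneg_left hc h.le
  calc x * sin y = y * (x / y * sin y) := by field_simp
    _ ≤ _ := this

lemma sin_add_sq_div_le {q α c : ℝ} (hα : 0 ≤ α) (hc : 0 < c) (hq : 2 * α < q)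
    (h : (q + α) * c ≤ π / 2) :
    sin ((q + α) * c) ^ 2 / (sin (q * c) * sin ((q - 2 * α) * c)) ≤
      (q + α) ^ 2 / ((q - 2 * α) * q) := by
  have hπ := pi_pos
  have hq0 : 0 < q := by linarith
  have hq' : 0 < q - 2 * α := by linarith
  have l1 : q * c ≤ (q + α) * c := by gcongr; linarith
  have l2 : (q - 2 * α) * c ≤ (q + α) * c := by gcongr; linarith
  have p1 : 0 < sin (q * c) := sin_pos_of_pos_of_lt_pi (by positivity) (by linarith)
  have p2 : 0 < sin ((q - 2 * α) * c) := sin_pos_of_pos_of_lt_pi (by positivity) (by linarith)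
  have p3 : 0 ≤ sin ((q + α) * c) := sin_nonneg_of_nonneg_of_le_pi (by positivity) (by linarith)
  have h1 := mul_sin_le_mul_sin (by positivity) l1 (by linarith)
  have h2 := mul_sin_le_mul_sin (by positivity) l2 (by linarith)
  have h1' : q * sin ((q + α) * c) ≤ (q + α) * sin (q * c) := by
    refine le_of_mul_le_mul_left ?_ hc
    linarith
  have h2' : (q - 2 * α) * sin ((q + α) * c) ≤ (q + α) * sin ((q - 2 * α) * c) := by
    refine le_of_mul_le_mul_left ?_ hc
    linarith
  rw [div_le_div_iff₀ (by positivity) (by positivity)]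
  have := mul_le_mul h1' h2' (by positivity) (by positivity)
  linarith

lemma abs_mul_sub_mul_le {X Y A B P M : ℝ} (hA : 0 ≤ A) (hB : 0 ≤ B) (hAP : A ≤ P) (hBP : B ≤ P)
    (hX : |X| ≤ M) (hY : |Y| ≤ M) (hXY : |X - Y| ≤ M) : |X * A - Y * B| ≤ M * P := by
  rw [abs_le] at *
  have hP := hA.trans hAP
  rcases le_total 0 X with hX0 | hX0 <;> rcases le_total 0 Y with hY0 | hY0 <;>
    constructor <;> nlinarith [mul_nonneg hA (sub_nonneg.2 hAP)]

lemma abs_sin_sub_sin_le {x y β : ℝ} (hβ : β ≤ π / 2) (h : |x - y| ≤ 2 * β) :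
    |sin x - sin y| ≤ 2 * sin β := by
  rw [abs_le] at h
  rw [sin_sub_sin, abs_mul, abs_mul, abs_two]
  have h1 : |sin ((x - y) / 2)| ≤ sin β := by
    rw [abs_le, ← sin_neg]
    constructor <;> apply sin_le_sin_of_le_of_le_pi_div_two <;> linarith
  have h2 := abs_cos_le_one ((x + y) / 2)
  nlinarith [abs_nonneg (sin ((x - y) / 2)), abs_nonneg (cos ((x + y) / 2))]

/-- The relative perturbations of the nodes, extended periodically to all integers. -/
lemma PerturbedNodes.exists_periodic {N : ℕ} {α : ℝ} {x : ℤ → ℝ} (hx : PerturbedNodes N α x) :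
    ∃ δ : ℤ → ℝ, (∀ m, δ (m + (2 * N + 1)) = δ m) ∧ (∀ m, |δ m| ≤ α) ∧
      ∀ m ∈ Icc (-(N : ℤ)) N, x m = (m + δ m) * (2 * π / (2 * N + 1)) := by
  have hh : 0 < 2 * π / (2 * N + 1) := by positivity
  set r : ℤ → ℤ := fun m => (m + N) % (2 * N + 1) - N with hr
  have hrI : ∀ m, r m ∈ Icc (-(N : ℤ)) N := by
    intro m
    have h1 := Int.emod_nonneg (m + N) (b := 2 * N + 1) (by omega)
    have h2 := Int.emod_lt_of_pos (m + N) (b := 2 * N + 1) (by omega)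
    simp only [hr, mem_Icc]
    omega
  refine ⟨fun m => x (r m) / (2 * π / (2 * N + 1)) - r m, ?_, ?_, ?_⟩
  · intro m
    have : r (m + (2 * N + 1)) = r m := by
      simp only [hr]
      rw [add_right_comm, Int.add_emod_right]
    simp only [this]
  · intro m
    have h := hx (r m) (hrI m)
    rw [← mul_le_mul_iff_left₀ hh]
    refine le_trans (le_of_eq ?_) h
    rw [← abs_of_pos hh, ← abs_mul, abs_of_pos hh, sub_mul, div_mul_cancel₀ _ hh.ne']
  · intro m hm
    have : r m = m := by
      rw [mem_Icc] at hm
      simp only [hr]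
      rw [Int.emod_eq_of_lt (by omega) (by omega)]
      ring
    simp only [this]
    field_simp
    ring

lemma lagrange_add_two_pi {N : ℕ} {x : ℤ → ℝ} {j : ℤ} (hj : j ∈ Icc (-(N : ℤ)) N) (y : ℝ) :
    lagrange N x j (y + 2 * π) = lagrange N x j y := by
  have h : ∀ m, sin ((y + 2 * π - x m) / 2) / sin ((x j - x m) / 2) =
      -1 * (sin ((y - x m) / 2) / sin ((x j - x m) / 2)) := by
    intro m
    rw [show (y + 2 * π - x m) / 2 = (y - x m) / 2 + π by ring, sin_add_pi]
    ring
  have hcard : ((Icc (-(N : ℤ)) N).erase j).card = 2 * N := by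
    rw [card_erase_of_mem hj, Int.card_Icc]
    omega
  simp only [lagrange, h]
  rw [prod_mul_distrib, prod_const, hcard, pow_mul]
  norm_num

/-- The product of the two sine factors at grid distance `q` from the index `k`. -/
noncomputable def pairFactor (c : ℝ) (e : ℤ → ℝ) (k : ℤ) (q : ℕ) : ℝ :=
  sin ((q - e (k + q)) * c) * sin ((q + e (k - q)) * c)

lemma prod_sin_eq (N : ℕ) (δ : ℤ → ℝ) (hδ : ∀ m, δ (m + (2 * N + 1)) = δ m) (j k : ℤ) :
    ∏ m ∈ Icc (-(N : ℤ)) N, sin (((k : ℝ) - m + (δ j - δ m)) * (π / (2 * N + 1))) =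
      (-1) ^ k * (sin ((δ j - δ k) * (π / (2 * N + 1))) *
        ((-1) ^ N * ∏ q ∈ Icc 1 N, pairFactor (π / (2 * N + 1)) (fun m => δ j - δ m) k q)) := by
  rw [prod_Icc_eq_of_antiperiodic _ N _ k]
  · have hneg : (-1 : ℝ) ^ N = ∏ q ∈ Icc 1 N, (-1 : ℝ) := by simp
    rw [hneg, ← prod_mul_distrib]
    congr 2
    · simp
    · refine prod_congr rfl fun q _ => ?_
      simp only [pairFactor]
      rw [neg_one_mul, ← neg_mul, ← sin_neg]
      push_cast
      ring_nf
  · intro m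
    rw [hδ, ← sin_sub_pi]
    congr 1
    push_cast
    field_simp
    ring

lemma prod_erase_sin_eq (N : ℕ) (δ : ℤ → ℝ) (hδ : ∀ m, δ (m + (2 * N + 1)) = δ m) {j : ℤ}
    (hj : j ∈ Icc (-(N : ℤ)) N) :
    ∏ m ∈ (Icc (-(N : ℤ)) N).erase j, sin (((j : ℝ) - m + (δ j - δ m)) * (π / (2 * N + 1))) =
      (-1) ^ j *
        ((-1) ^ N * ∏ q ∈ Icc 1 N, pairFactor (π / (2 * N + 1)) (fun m => δ j - δ m) j q) := by
  set c := π / (2 * N + 1) with hc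
  -- The vanishing factors are replaced by nonzero ones in a way that keeps antiperiodicity.
  set g : ℤ → ℝ := fun m => if (2 * N + 1 : ℤ) ∣ m - j then cos (((m : ℝ) - j) * c)
    else sin (((j : ℝ) - m + (δ j - δ m)) * c) with hg
  have hgj : g j = 1 := by simp [hg]
  have hne : ∀ m : ℤ, m ≠ j → |m - j| ≤ 2 * N →
      g m = sin (((j : ℝ) - m + (δ j - δ m)) * c) := by
    intro m hm hmj
    have : ¬ (2 * N + 1 : ℤ) ∣ m - j := by
      intro hdvd
      have := Int.eq_zero_of_abs_lt_dvd hdvd (by omega)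
      omega
    simp only [hg, if_neg this]
  have hanti : ∀ m, g (m + (2 * N + 1)) = -g m := by
    intro m
    have hiff : (2 * N + 1 : ℤ) ∣ m + (2 * N + 1) - j ↔ (2 * N + 1 : ℤ) ∣ m - j := by
      rw [add_sub_right_comm, dvd_add_self_right]
    have hπ : (2 * N + 1 : ℝ) * c = π := by
      rw [hc]
      field_simp
    simp only [hg, hiff, hδ]
    split_ifs
    · rw [← cos_add_pi, ← hπ]
      congr 1
      push_cast
      ring
    · rw [← sin_sub_pi, ← hπ]
      congr 1
      push_cast
      ring
  have hprod := prod_Icc_eq_of_antiperiodic g N hanti j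
  rw [← mul_prod_erase _ _ hj, hgj, one_mul, one_mul] at hprod
  rw [mem_Icc] at hj
  rw [prod_congr rfl (g := g), hprod]
  · have hneg : (-1 : ℝ) ^ N = ∏ q ∈ Icc 1 N, (-1 : ℝ) := by simp
    rw [hneg, ← prod_mul_distrib]
    congr 1
    refine prod_congr rfl fun q hq => ?_
    rw [mem_Icc] at hq
    rw [hne _ (by omega) (by rw [abs_le]; omega), hne _ (by omega) (by rw [abs_le]; omega)]
    simp only [pairFactor]
    rw [neg_one_mul, ← neg_mul, ← sin_neg]
    push_cast
    ring_nf
  · intro m hm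
    rw [mem_erase, mem_Icc] at hm
    exact (hne m hm.1 (by rw [abs_le]; omega)).symm

lemma lagrange_shift_eq {N : ℕ} {x δ : ℤ → ℝ} (hδ : ∀ m, δ (m + (2 * N + 1)) = δ m)
    (hx : ∀ m ∈ Icc (-(N : ℤ)) N, x m = (m + δ m) * (2 * π / (2 * N + 1)))
    {j : ℤ} (hj : j ∈ Icc (-(N : ℤ)) N) {k : ℤ}
    (hk : sin (((k : ℝ) - j) * (π / (2 * N + 1))) ≠ 0) :
    lagrange N x j (x j + ((k : ℝ) - j) * (2 * π / (2 * N + 1))) =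
      (-1) ^ (k - j) * sin ((δ j - δ k) * (π / (2 * N + 1))) /
        sin (((k : ℝ) - j) * (π / (2 * N + 1))) *
        ∏ q ∈ Icc 1 N, (pairFactor (π / (2 * N + 1)) (fun m => δ j - δ m) k q /
          pairFactor (π / (2 * N + 1)) (fun m => δ j - δ m) j q) := by
  have hnum := prod_sin_eq N δ hδ j k
  have hden := prod_erase_sin_eq N δ hδ hj
  rw [← mul_prod_erase _ _ hj, sub_self, add_zero] at hnum
  have hterm : ∀ m ∈ (Icc (-(N : ℤ)) N).erase j,
      sin ((x j + ((k : ℝ) - j) * (2 * π / (2 * N + 1)) - x m) / 2) / sin ((x j - x m) / 2) =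
      sin (((k : ℝ) - m + (δ j - δ m)) * (π / (2 * N + 1))) /
        sin (((j : ℝ) - m + (δ j - δ m)) * (π / (2 * N + 1))) := by
    intro m hm
    rw [hx j hj, hx m (mem_of_mem_erase hm)]
    congr 2 <;> ring
  rw [lagrange, prod_congr rfl hterm, prod_div_distrib, hden, ← mul_right_inj' hk,
    ← mul_div_assoc, hnum, prod_div_distrib, zpow_sub₀ (by norm_num)]
  have h1 : ((-1 : ℝ) ^ N) ≠ 0 := pow_ne_zero _ (by norm_num)
  generalize sin (((k : ℝ) - j) * (π / (2 * N + 1))) = s at hk ⊢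
  field_simp

section Bounds

variable {N : ℕ} {α : ℝ} {δ : ℤ → ℝ}

lemma add_mul_le_half_pi {q : ℕ} (hα : α < 1 / 2) (hq : q ∈ Icc 1 N) :
    ((q : ℝ) + α) * (π / (2 * N + 1)) ≤ π / 2 := by
  have hq' : (1 : ℝ) ≤ q ∧ (q : ℝ) ≤ N := by exact_mod_cast mem_Icc.1 hq
  rw [mul_div_assoc', div_le_div_iff₀ (by positivity) (by norm_num)]
  nlinarith [pi_pos]

lemma pairFactor_le (hα : α < 1 / 2) (hδ : ∀ m, |δ m| ≤ α) (j k : ℤ) {q : ℕ} (hq : q ∈ Icc 1 N) :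
    pairFactor (π / (2 * N + 1)) (fun m => δ j - δ m) k q ≤
      sin ((q + α) * (π / (2 * N + 1))) ^ 2 := by
  have hc : 0 < π / (2 * N + 1) := by positivity
  have hq' : (1 : ℝ) ≤ q ∧ (q : ℝ) ≤ N := by exact_mod_cast mem_Icc.1 hq
  have h1 := abs_le.1 (hδ (k + q))
  have h2 := abs_le.1 (hδ (k - q))
  apply sin_mul_sin_le_sin_sq
  · rw [← add_mul]
    apply mul_nonneg _ hc.le
    linarith
  · rw [← add_mul, ← mul_assoc]
    gcongr
    linarith
  · exact add_mul_le_half_pi hα hq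

lemma pairFactor_pos (hα : α < 1 / 2) (hδ : ∀ m, |δ m| ≤ α) (j k : ℤ) {q : ℕ}
    (hq : q ∈ Icc 1 N) : 0 < pairFactor (π / (2 * N + 1)) (fun m => δ j - δ m) k q := by
  have hc : 0 < π / (2 * N + 1) := by positivity
  have hπ : (2 * N + 1 : ℝ) * (π / (2 * N + 1)) = π := by field_simp
  have hq' : (1 : ℝ) ≤ q ∧ (q : ℝ) ≤ N := by exact_mod_cast mem_Icc.1 hq
  have h0 := abs_le.1 (hδ j)
  have h1 := abs_le.1 (hδ (k + q))
  have h2 := abs_le.1 (hδ (k - q))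
  apply mul_pos <;> apply sin_pos_of_pos_of_lt_pi
  · exact mul_pos (by linarith) hc
  · rw [← lt_div_iff₀ hc, eq_div_of_mul_eq hc.ne' hπ |>.symm]
    linarith
  · exact mul_pos (by linarith) hc
  · rw [← lt_div_iff₀ hc, eq_div_of_mul_eq hc.ne' hπ |>.symm]
    linarith

lemma pairFactor_self_ge (hα : α < 1 / 2) (hδ : ∀ m, |δ m| ≤ α) (j : ℤ) {q : ℕ}
    (hq : q ∈ Icc 1 N) :
    sin (q * (π / (2 * N + 1))) * sin ((q - 2 * α) * (π / (2 * N + 1))) ≤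
      pairFactor (π / (2 * N + 1)) (fun m => δ j - δ m) j q := by
  have hc : 0 < π / (2 * N + 1) := by positivity
  have hq' : (1 : ℝ) ≤ q ∧ (q : ℝ) ≤ N := by exact_mod_cast mem_Icc.1 hq
  have hle := add_mul_le_half_pi hα hq
  set c := π / (2 * N + 1)
  have hscale : ∀ t : ℝ, |t| ≤ α → |t * c| ≤ α * c := by
    intro t ht
    rw [abs_mul, abs_of_pos hc]
    gcongr
  rw [sub_mul, mul_assoc]
  apply sin_mul_sin_ge (δ := δ j * c)
  · nlinarith
  · linarith
  · exact hscale _ (hδ j)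
  · convert hscale _ (hδ (j + q)) using 2
    ring
  · convert hscale _ ((abs_neg _).trans_le (hδ (j - q))) using 2
    ring

lemma prod_pairFactor_div_le (hα0 : 0 ≤ α) (hα : α < 1 / 2) (hδ : ∀ m, |δ m| ≤ α) (j k : ℤ) :
    ∏ q ∈ Icc 1 N, (pairFactor (π / (2 * N + 1)) (fun m => δ j - δ m) k q /
        pairFactor (π / (2 * N + 1)) (fun m => δ j - δ m) j q) ≤
      ∏ m ∈ Icc 1 N, ((m : ℝ) + α) ^ 2 / (((m : ℝ) - 2 * α) * (m : ℝ)) := by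
  refine prod_le_prod (fun q hq => ?_) fun q hq => ?_
  · exact (div_pos (pairFactor_pos hα hδ j k hq) (pairFactor_pos hα hδ j j hq)).le
  · have hc : 0 < π / (2 * N + 1) := by positivity
    have hq' : (1 : ℝ) ≤ q ∧ (q : ℝ) ≤ N := by exact_mod_cast mem_Icc.1 hq
    have hle := add_mul_le_half_pi hα hq
    refine le_trans ?_ (sin_add_sq_div_le hα0 hc (by linarith) hle)
    refine div_le_div₀ (sq_nonneg _) (pairFactor_le hα hδ j k hq) ?_
      (pairFactor_self_ge hα hδ j hq)
    apply mul_pos <;> apply sin_pos_of_pos_of_lt_pi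
    · exact mul_pos (by linarith) hc
    · nlinarith [pi_pos]
    · exact mul_pos (by linarith) hc
    · nlinarith [pi_pos]

end Bounds

/-- The pair bound for the indices `j + d` and `j - d`, not reduced to the index range. -/
lemma abs_lagrange_add_lagrange_le {N : ℕ} {α : ℝ} {x δ : ℤ → ℝ} (hα0 : 0 ≤ α) (hα : α < 1 / 2)
    (hper : ∀ m, δ (m + (2 * N + 1)) = δ m) (hδ : ∀ m, |δ m| ≤ α)
    (hx : ∀ m ∈ Icc (-(N : ℤ)) N, x m = (m + δ m) * (2 * π / (2 * N + 1)))
    {j : ℤ} (hj : j ∈ Icc (-(N : ℤ)) N) {d : ℤ} (hd1 : 1 ≤ d) (hdN : d ≤ N) :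
    |lagrange N x j (x j + d * (2 * π / (2 * N + 1))) +
        lagrange N x j (x j + -d * (2 * π / (2 * N + 1)))| ≤
      (π * α / d) * ∏ m ∈ Icc 1 N, ((m : ℝ) + α) ^ 2 / (((m : ℝ) - 2 * α) * (m : ℝ)) := by
  have hc : 0 < π / (2 * N + 1) := by positivity
  have hπ : (2 * N + 1 : ℝ) * (π / (2 * N + 1)) = π := by field_simp
  have hd1' : (1 : ℝ) ≤ d := by exact_mod_cast hd1
  have hdN' : (d : ℝ) ≤ N := by exact_mod_cast hdN
  have hplus := lagrange_shift_eq (k := j + d) hper hx hj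
  have hminus := lagrange_shift_eq (k := j - d) hper hx hj
  have hA := prod_pairFactor_div_le (N := N) hα0 hα hδ j (j + d)
  have hB := prod_pairFactor_div_le (N := N) hα0 hα hδ j (j - d)
  have hpos : ∀ k, 0 ≤ ∏ q ∈ Icc 1 N, (pairFactor (π / (2 * N + 1)) (fun m => δ j - δ m) k q /
      pairFactor (π / (2 * N + 1)) (fun m => δ j - δ m) j q) := fun k => prod_nonneg fun q hq =>
    (div_pos (pairFactor_pos hα hδ j k hq) (pairFactor_pos hα hδ j j hq)).le
  have hA0 := hpos (j + d)
  have hB0 := hpos (j - d)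
  set P := ∏ m ∈ Icc 1 N, ((m : ℝ) + α) ^ 2 / (((m : ℝ) - 2 * α) * (m : ℝ))
  set A := ∏ q ∈ Icc 1 N, (pairFactor (π / (2 * N + 1)) (fun m => δ j - δ m) (j + d) q /
      pairFactor (π / (2 * N + 1)) (fun m => δ j - δ m) j q)
  set B := ∏ q ∈ Icc 1 N, (pairFactor (π / (2 * N + 1)) (fun m => δ j - δ m) (j - d) q /
      pairFactor (π / (2 * N + 1)) (fun m => δ j - δ m) j q)
  have hαc : α * (π / (2 * N + 1)) ≤ π / 2 := by nlinarith
  have hsin : 2 * d / (2 * N + 1) ≤ sin (d * (π / (2 * N + 1))) := by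
    refine le_trans (le_of_eq ?_) (mul_le_sin (by positivity) (by nlinarith))
    field_simp
  set c := π / (2 * N + 1) with hcdef
  have hlow : 0 < 2 * (d : ℝ) / (2 * N + 1) := by positivity
  have hs : 0 < sin (d * c) := hlow.trans_le hsin
  push_cast at hplus hminus
  rw [add_sub_cancel_left, add_sub_cancel_left] at hplus
  rw [sub_sub_cancel_left, sub_sub_cancel_left, neg_mul (d : ℝ) c, sin_neg] at hminus
  rw [hplus hs.ne', hminus (neg_ne_zero.2 hs.ne')]
  have hdist : ∀ a b, |(δ j - δ a) * c - (δ j - δ b) * c| ≤ 2 * (α * c) := by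
    intro a b
    have h1 := abs_le.1 (hδ a)
    have h2 := abs_le.1 (hδ b)
    rw [← sub_mul, abs_mul, abs_of_pos hc, ← mul_assoc]
    gcongr
    rw [abs_le]
    constructor <;> linarith
  have hdiff : ∀ a b, |sin ((δ j - δ a) * c) - sin ((δ j - δ b) * c)| ≤ 2 * sin (α * c) :=
    fun a b => abs_sin_sub_sin_le hαc (hdist a b)
  have hsingle : ∀ a, |sin ((δ j - δ a) * c)| ≤ 2 * sin (α * c) := by
    intro a
    simpa using hdiff a j
  have hmain := abs_mul_sub_mul_le hA0 hB0 hA hB (hsingle (j + d)) (hsingle (j - d))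
    (hdiff (j + d) (j - d))
  have hP : 0 ≤ P := hA0.trans hA
  have hsq : |(-1 : ℝ) ^ d| = 1 := by rw [abs_zpow]; simp
  have hneg : (-1 : ℝ) ^ (-d) = (-1) ^ d := by rw [zpow_neg, ← inv_zpow]; norm_num
  rw [hneg]
  calc _ = |(-1 : ℝ) ^ d * (sin ((δ j - δ (j + d)) * c) * A - sin ((δ j - δ (j - d)) * c) * B) /
        sin (d * c)| := by
        congr 1
        field_simp
        ring
    _ = |sin ((δ j - δ (j + d)) * c) * A - sin ((δ j - δ (j - d)) * c) * B| / sin (d * c) := by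
        rw [abs_div, abs_mul, hsq, one_mul, abs_of_pos hs]
    _ ≤ 2 * (α * c) * P / (2 * d / (2 * N + 1)) := by
        have := sin_le (x := α * c) (by positivity)
        refine div_le_div₀ (by positivity) (hmain.trans ?_) hlow hsin
        gcongr
    _ = π * α / d * P := by
        rw [hcdef]
        field_simp

/-- bound on the paired values of the Lagrange basis polynomial `ℓ_j` at the
two shifted grid points at circular index distance d from j. -/
theorem lagrange_pair_bound (α : ℝ) (hα0 : 0 ≤ α) (hα : α < 1/2)
    (N : ℕ) (hN : 0 < N)
    (x : ℤ → ℝ) (hx : PerturbedNodes N α x)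
    (j : ℤ) (hj : j ∈ Finset.Icc (-(N:ℤ)) (N:ℤ))
    (d : ℤ) (hd1 : 1 ≤ d) (hdN : d ≤ (N:ℤ))
    (k₁ k₂ : ℤ) (hk₁ : k₁ ∈ Finset.Icc (-(N:ℤ)) (N:ℤ)) (hk₂ : k₂ ∈ Finset.Icc (-(N:ℤ)) (N:ℤ))
    (hk₁j : k₁ ≠ j) (hk₂j : k₂ ≠ j) (hk₁₂ : k₁ ≠ k₂)
    (hd₁ : min |j - k₁| (2*(N:ℤ)+1 - |j - k₁|) = d)
    (hd₂ : min |j - k₂| (2*(N:ℤ)+1 - |j - k₂|) = d) :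
    |lagrange N x j (x j + ((k₁ : ℝ) - (j : ℝ)) * (2*π/(2*N+1))) +
        lagrange N x j (x j + ((k₂ : ℝ) - (j : ℝ)) * (2*π/(2*N+1)))| ≤
      (π * α / (d : ℝ)) *
        ∏ m ∈ Finset.Icc 1 N, ((m : ℝ) + α)^2 / (((m : ℝ) - 2*α) * (m : ℝ)) := by
  obtain ⟨δ, hper, hδ, hxδ⟩ := hx.exists_periodic
  have hbound := abs_lagrange_add_lagrange_le hα0 hα hper hδ hxδ hj hd1 hdN
  have hn : (2 * N + 1 : ℝ) * (2 * π / (2 * N + 1)) = 2 * π := by field_simp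
  have hplus : ∀ k : ℤ, k = j + d ∨ k = j + d - (2 * N + 1) →
      lagrange N x j (x j + ((k : ℝ) - j) * (2 * π / (2 * N + 1))) =
        lagrange N x j (x j + d * (2 * π / (2 * N + 1))) := by
    rintro k (rfl | rfl)
    · push_cast
      ring_nf
    · rw [← lagrange_add_two_pi hj]
      congr 1
      push_cast
      linear_combination -hn
  have hminus : ∀ k : ℤ, k = j - d ∨ k = j - d + (2 * N + 1) →
      lagrange N x j (x j + ((k : ℝ) - j) * (2 * π / (2 * N + 1))) =
        lagrange N x j (x j + -d * (2 * π / (2 * N + 1))) := by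
    rintro k (rfl | rfl)
    · push_cast
      ring_nf
    · rw [← lagrange_add_two_pi hj (x j + -d * _)]
      congr 1
      push_cast
      linear_combination hn
  rw [mem_Icc] at hj hk₁ hk₂
  have hcases : ((k₁ = j + d ∨ k₁ = j + d - (2 * N + 1)) ∧
        (k₂ = j - d ∨ k₂ = j - d + (2 * N + 1))) ∨
      ((k₂ = j + d ∨ k₂ = j + d - (2 * N + 1)) ∧
        (k₁ = j - d ∨ k₁ = j - d + (2 * N + 1))) := by
    rcases abs_cases (j - k₁) with h₁ | h₁ <;> rcases abs_cases (j - k₂) with h₂ | h₂ <;> omega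
  rcases hcases with ⟨h₁, h₂⟩ | ⟨h₂, h₁⟩
  · rw [hplus k₁ h₁, hminus k₂ h₂]
    exact hbound
  · rw [hminus k₁ h₁, hplus k₂ h₂, add_comm]
    exact hbound
end

section
/- Let 0 < α < 1/2 and let N be a positive integer such that πα · (∏_{m=1}^{N} (m+α)²/((m−2α)m)) · (Σ_{d=1}^{N} 1/d) ≤ 1. Then for every set of α-perturbed nodes x̃_{−N},…,x̃_N, all weights w̃_{−N},…,w̃_N of the unique quadrature rule exact on T_N at these nodes are nonnegative. -/
open Real Finset

/-- `q` is a trigonometric polynomial of degree ≤ N. -/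
def IsTrigPoly (N : ℕ) (q : ℝ → ℂ) : Prop :=
  ∃ c : ℤ → ℂ, ∀ x : ℝ,
    q x = ∑ k ∈ Finset.Icc (-(N:ℤ)) (N:ℤ), c k * Complex.exp (Complex.I * (k : ℂ) * (x : ℂ))

/-- The weights `w` form a quadrature rule at the nodes `x` that is exact on `T_N`. -/
def ExactQuad (N : ℕ) (x : ℤ → ℝ) (w : ℤ → ℝ) : Prop :=
  ∀ q : ℝ → ℂ, IsTrigPoly N q →
    ∑ j ∈ Finset.Icc (-(N:ℤ)) (N:ℤ), (w j : ℂ) * q (x j) = ∫ t in (-π)..π, q t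

/-- `sin x / x` is nonincreasing on `(0, π / 2]`. -/
lemma mul_sin_le_mul_sin_s18 {a b : ℝ} (ha : 0 < a) (hab : a ≤ b) (hb : b ≤ π / 2) :
    a * sin b ≤ b * sin a := by
  have hb0 : 0 < b := ha.trans_le hab
  have h := strictConcaveOn_sin_Icc.concaveOn.2
    (show (0 : ℝ) ∈ Set.Icc 0 π from ⟨le_rfl, pi_pos.le⟩)
    (show b ∈ Set.Icc 0 π from ⟨hb0.le, by linarith [pi_pos]⟩)
    (show 0 ≤ 1 - a / b by rw [sub_nonneg, div_le_one hb0]; exact hab)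
    (show 0 ≤ a / b by positivity) (by ring)
  simp only [smul_eq_mul, sin_zero, mul_zero, zero_add, div_mul_cancel₀ a hb0.ne'] at h
  calc a * sin b = b * (a / b * sin b) := by field_simp
    _ ≤ b * sin a := by gcongr

lemma bmod_mem_Icc (N : ℕ) (n : ℤ) :
    n.bmod (2 * N + 1) ∈ Icc (-(N : ℤ)) (N : ℤ) := by
  have h1 := Int.le_bmod (x := n) (m := 2 * N + 1) (by omega)
  have h2 := Int.bmod_lt (x := n) (m := 2 * N + 1) (by omega)
  rw [Finset.mem_Icc]
  push_cast at h1 h2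
  omega

lemma bmod_eq_self {N : ℕ} {n : ℤ} (hn : n ∈ Icc (-(N : ℤ)) (N : ℤ)) :
    n.bmod (2 * N + 1) = n := by
  rw [Finset.mem_Icc] at hn
  apply Int.bmod_eq_of_le <;> push_cast <;> omega

lemma bmod_sub_bmod_sub {N : ℕ} {k l : ℤ} (hl : l ∈ Icc (-(N : ℤ)) (N : ℤ)) :
    (k - (k - l).bmod (2 * N + 1)).bmod (2 * N + 1) = l := by
  rw [Int.sub_bmod_bmod, sub_sub_cancel, bmod_eq_self hl]

/-- Reindexing the circular differences `k - l`, `l ≠ k`, modulo `2N + 1`. -/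
lemma prod_erase_bmod {M : Type*} [CommMonoid M] {N : ℕ} {k : ℤ}
    (hk : k ∈ Icc (-(N : ℤ)) (N : ℤ)) (f : ℤ → M) :
    ∏ l ∈ (Icc (-(N : ℤ)) (N : ℤ)).erase k, f ((k - l).bmod (2 * N + 1)) =
      ∏ n ∈ (Icc (-(N : ℤ)) (N : ℤ)).erase 0, f n := by
  refine Finset.prod_nbij' (fun l => (k - l).bmod (2 * N + 1))
    (fun l => (k - l).bmod (2 * N + 1)) ?_ ?_ ?_ ?_ (fun _ _ => rfl)
  · intro l hl
    rw [Finset.mem_erase] at hl ⊢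
    refine ⟨fun h => hl.1 ?_, bmod_mem_Icc N _⟩
    have := bmod_sub_bmod_sub (k := k) hl.2
    rw [h, sub_zero, bmod_eq_self hk] at this
    exact this.symm
  · intro l hl
    rw [Finset.mem_erase] at hl ⊢
    refine ⟨fun h => hl.1 ?_, bmod_mem_Icc N _⟩
    have := bmod_sub_bmod_sub (k := k) hl.2
    rw [h, sub_self] at this
    simpa using this.symm
  · intro l hl
    exact bmod_sub_bmod_sub (Finset.mem_of_mem_erase hl)
  · intro l hl
    exact bmod_sub_bmod_sub (Finset.mem_of_mem_erase hl)

lemma prod_erase_zero_natAbs {M : Type*} [CommMonoid M] (N : ℕ) (f : ℕ → M) :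
    ∏ n ∈ (Icc (-(N : ℤ)) (N : ℤ)).erase 0, f n.natAbs = (∏ m ∈ Icc 1 N, f m) ^ 2 := by
  induction N with
  | zero => simp
  | succ N ih =>
    have h : (Icc (-((N + 1 : ℕ) : ℤ)) ((N + 1 : ℕ) : ℤ)).erase 0 =
        insert ((N : ℤ) + 1) (insert (-((N : ℤ) + 1)) ((Icc (-(N : ℤ)) (N : ℤ)).erase 0)) := by
      ext n
      simp only [Finset.mem_erase, Finset.mem_Icc, Finset.mem_insert]
      push_cast
      omega
    have h1 : ((N : ℤ) + 1).natAbs = N + 1 := by omega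
    have h2 : (-((N : ℤ) + 1)).natAbs = N + 1 := by omega
    rw [h, Finset.prod_insert, Finset.prod_insert, ih, Finset.prod_Icc_succ_top (by omega), h1, h2,
      mul_pow, ← mul_assoc, mul_comm, ← sq]
    · simp
    · simp only [Finset.mem_erase, Finset.mem_Icc, Finset.mem_insert]
      omega

lemma sum_erase_bmod_natAbs {N : ℕ} {j : ℤ} (hj : j ∈ Icc (-(N : ℤ)) (N : ℤ)) (f : ℕ → ℝ) :
    ∑ k ∈ (Icc (-(N : ℤ)) (N : ℤ)).erase j, f ((j - k).bmod (2 * N + 1)).natAbs =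
      2 * ∑ d ∈ Icc 1 N, f d := by
  have h1 := prod_erase_bmod (M := Multiplicative ℝ) hj (fun n => Multiplicative.ofAdd (f n.natAbs))
  have h2 := prod_erase_zero_natAbs (M := Multiplicative ℝ) N (fun n => Multiplicative.ofAdd (f n))
  rw [h2] at h1
  have h3 := congrArg Multiplicative.toAdd h1
  simpa [toAdd_prod] using h3

/-- Bounds for `|sin|` at a point within `α` of an integer multiple of `π / (2N + 1)`. -/
lemma abs_sin_bounds {N : ℕ} {α δ : ℝ} (hα : α < 1 / 2) (hδ : |δ| ≤ α) (n : ℤ) :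
    |sin ((n + δ) * (π / (2 * N + 1)))| ≤
        sin (((n.bmod (2 * N + 1)).natAbs + α) * (π / (2 * N + 1))) ∧
      (n.bmod (2 * N + 1) ≠ 0 →
        sin (((n.bmod (2 * N + 1)).natAbs - α) * (π / (2 * N + 1))) ≤
          |sin ((n + δ) * (π / (2 * N + 1)))|) := by
  set r := n.bmod (2 * N + 1) with hr
  set u : ℝ := π / (2 * N + 1) with hu
  have hM : (0 : ℝ) < 2 * N + 1 := by positivity
  have hu0 : 0 < u := by positivity
  have huM : (2 * N + 1) * u = π := by rw [hu]; field_simp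
  have hrm : r ∈ Icc (-(N : ℤ)) (N : ℤ) := bmod_mem_Icc N n
  rw [Finset.mem_Icc] at hrm
  have hrN : r.natAbs ≤ N := by omega
  have hrN' : (r.natAbs : ℝ) ≤ N := by exact_mod_cast hrN
  obtain ⟨q, hq⟩ : ∃ q : ℤ, n = r + q * (2 * N + 1) := by
    refine ⟨n.bdiv (2 * N + 1), ?_⟩
    have := Int.bmod_add_bdiv n (2 * N + 1)
    push_cast at this
    rw [hr]
    linarith
  have hαδ : 0 ≤ α := (abs_nonneg δ).trans hδ
  have key : |sin ((n + δ) * u)| = |sin (|r + δ| * u)| := by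
    have e : ((n : ℝ) + δ) * u = (r + δ) * u + q * π := by
      rw [hq, ← huM]; push_cast; ring
    rw [e, sin_add_int_mul_pi, abs_mul, abs_zpow, abs_neg, abs_one, one_zpow, one_mul]
    rcases abs_choice ((r : ℝ) + δ) with h | h <;> rw [h]
    rw [neg_mul, sin_neg, abs_neg]
  have hrabs : (r.natAbs : ℝ) = |(r : ℝ)| := by
    rw [Nat.cast_natAbs, Int.cast_abs]
  have hup : |(r : ℝ) + δ| ≤ r.natAbs + α := by
    rw [hrabs]; exact (abs_add_le _ _).trans (by gcongr)
  have hlo : r.natAbs - α ≤ |(r : ℝ) + δ| := by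
    have := abs_sub_abs_le_abs_sub (r : ℝ) (-δ)
    rw [abs_neg, sub_neg_eq_add] at this
    rw [hrabs]; linarith
  have htop : (r.natAbs + α) * u ≤ π / 2 := by
    rw [← huM]; nlinarith
  have hmid : |(r : ℝ) + δ| * u ≤ (r.natAbs + α) * u := by gcongr
  have hnn : 0 ≤ |(r : ℝ) + δ| * u := by positivity
  have hsin : 0 ≤ sin (|(r : ℝ) + δ| * u) :=
    sin_nonneg_of_nonneg_of_le_pi hnn (by linarith [pi_pos])
  rw [key, abs_of_nonneg hsin]
  refine ⟨sin_le_sin_of_le_of_le_pi_div_two (by linarith [pi_pos]) htop hmid, fun hr0 => ?_⟩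
  have h1 : (1 : ℝ) ≤ r.natAbs := by
    exact_mod_cast Nat.one_le_iff_ne_zero.2 (Int.natAbs_ne_zero.2 hr0)
  refine sin_le_sin_of_le_of_le_pi_div_two ?_ (hmid.trans htop) (by gcongr)
  have : 0 ≤ (r.natAbs - α) * u := mul_nonneg (by linarith) hu0.le
  linarith [pi_pos]

/-- The rectangle rule with `2N + 1` equispaced nodes is exact on `T_N`. -/
lemma IsTrigPoly.integral_eq {N : ℕ} {q : ℝ → ℂ} (hq : IsTrigPoly N q) :
    ∫ t in (-π)..π, q t =
      (2 * π / (2 * N + 1) : ℝ) *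
        ∑ k ∈ Icc (-(N : ℤ)) (N : ℤ), q (k * (2 * π / (2 * N + 1))) := by
  obtain ⟨c, hc⟩ := hq
  have hM : (2 * N + 1 : ℂ) ≠ 0 := by exact_mod_cast (by omega : 2 * N + 1 ≠ 0)
  simp only [hc]
  rw [intervalIntegral.integral_finsetSum
    (fun k _ => Continuous.intervalIntegrable (by fun_prop) _ _), Finset.sum_comm, Finset.mul_sum]
  refine Finset.sum_congr rfl fun m hm => ?_
  rw [Finset.mem_Icc] at hm
  rw [intervalIntegral.integral_const_mul, ← Finset.mul_sum, mul_left_comm]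
  congr 1
  rcases eq_or_ne m 0 with rfl | hm0
  · have hcard : ((N : ℤ) + 1 + N).toNat = 2 * N + 1 := by omega
    simp [hcard]
    field_simp
    ring
  · have hc0 : Complex.I * (m : ℂ) ≠ 0 := by simp [hm0]
    rw [integral_exp_mul_complex hc0]
    have e1 : Complex.exp (Complex.I * m * (π : ℝ)) = Complex.exp (Complex.I * m * ((-π : ℝ) : ℂ)) := by
      rw [Complex.exp_eq_exp_iff_exists_int]
      exact ⟨m, by push_cast; ring⟩
    rw [e1, sub_self, zero_div]
    symm
    apply mul_eq_zero_of_right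
    set z := Complex.exp (Complex.I * m * (2 * π / (2 * N + 1))) with hz
    have hz1 : z ≠ 1 := by
      rw [hz, Ne, Complex.exp_eq_one_iff]
      rintro ⟨n, hn⟩
      have hpi : (π : ℂ) ≠ 0 := by exact_mod_cast pi_ne_zero
      field_simp at hn
      have hn' : m = (2 * N + 1) * n := by
        exact_mod_cast (by linear_combination hn : (m : ℂ) = (2 * N + 1) * n)
      rcases lt_trichotomy n 0 with h | h | h
      · nlinarith
      · simp [h] at hn'; exact hm0 hn'
      · nlinarith
    have hzM : z ^ (2 * N + 1) = 1 := by
      rw [hz, ← Complex.exp_nat_mul, Complex.exp_eq_one_iff]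
      exact ⟨m, by push_cast; field_simp⟩
    have hterm : ∀ k : ℤ, Complex.exp (Complex.I * m * ((k * (2 * π / (2 * N + 1)) : ℝ) : ℂ)) =
        z ^ k := by
      intro k
      rw [hz, ← Complex.exp_int_mul]
      congr 1
      push_cast
      ring
    simp only [hterm]
    have hz0 : z ≠ 0 := Complex.exp_ne_zero _
    have hre : ∑ k ∈ Icc (-(N : ℤ)) (N : ℤ), z ^ k =
        z ^ (-(N : ℤ)) * ∑ i ∈ Finset.range (2 * N + 1), z ^ i := by
      rw [Finset.mul_sum]
      refine Finset.sum_nbij' (fun k => (k + N).toNat) (fun i => (i : ℤ) - N) ?_ ?_ ?_ ?_ ?_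
      · intro k hk; simp at hk ⊢; omega
      · intro k hk; simp at hk ⊢; omega
      · intro k hk; simp at hk ⊢; omega
      · intro k hk; simp
      · intro k hk
        simp at hk
        rw [← zpow_natCast, ← zpow_add₀ hz0]
        congr 1
        omega
    rw [hre, geom_sum_eq hz1, hzM, sub_self, zero_div, mul_zero]

/-- A product of `2N` half-angle sines is a trigonometric polynomial of degree at most `N`. -/
lemma isTrigPoly_prod_sin {ι : Type*} {N : ℕ} {s : Finset ι} (hs : s.card = 2 * N) (a : ι → ℝ) :
    IsTrigPoly N fun t => ((∏ l ∈ s, sin ((t - a l) / 2) : ℝ) : ℂ) := by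
  set Q : Polynomial ℂ := ∏ l ∈ s, Polynomial.C (Complex.exp (-(Complex.I * a l / 2)) /
    (2 * Complex.I)) * (Polynomial.X - Polynomial.C (Complex.exp (Complex.I * a l))) with hQ
  have hdeg : Q.natDegree < 2 * N + 1 := by
    rw [Nat.lt_succ_iff, ← hs, hQ]
    refine (Polynomial.natDegree_prod_le _ _).trans ?_
    rw [Finset.card_eq_sum_ones]
    refine Finset.sum_le_sum fun l _ => (Polynomial.natDegree_C_mul_le _ _).trans ?_
    rw [Polynomial.natDegree_X_sub_C]
  refine ⟨fun k => Q.coeff (k + N).toNat, fun t => ?_⟩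
  have hsin : ∀ l, ((sin ((t - a l) / 2) : ℝ) : ℂ) = Complex.exp (-(Complex.I * t / 2)) *
      (Complex.exp (-(Complex.I * a l / 2)) / (2 * Complex.I) *
        (Complex.exp (Complex.I * t) - Complex.exp (Complex.I * a l))) := by
    intro l
    have e1 : Complex.exp (Complex.I * t) =
        Complex.exp (Complex.I * t / 2) * Complex.exp (Complex.I * t / 2) := by
      rw [← Complex.exp_add]; ring_nf
    have e2 : Complex.exp (Complex.I * a l) =
        Complex.exp (Complex.I * a l / 2) * Complex.exp (Complex.I * a l / 2) := by
      rw [← Complex.exp_add]; ring_nf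
    have e3 : -(((t : ℂ) - a l) / 2) * Complex.I = Complex.I * a l / 2 + -(Complex.I * t / 2) := by
      ring
    have e4 : (((t : ℂ) - a l) / 2) * Complex.I = Complex.I * t / 2 + -(Complex.I * a l / 2) := by
      ring
    push_cast
    rw [Complex.sin, e3, e4, e1, e2]
    simp only [Complex.exp_add, Complex.exp_neg]
    have h1 := Complex.exp_ne_zero (Complex.I * t / 2)
    have h2 := Complex.exp_ne_zero (Complex.I * a l / 2)
    field_simp
    rw [Complex.I_sq]
    ring
  have heval : ((∏ l ∈ s, sin ((t - a l) / 2) : ℝ) : ℂ) =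
      Complex.exp (-(Complex.I * N * t)) * Q.eval (Complex.exp (Complex.I * t)) := by
    rw [Complex.ofReal_prod, Finset.prod_congr rfl fun l _ => hsin l, Finset.prod_mul_distrib,
      Finset.prod_const, hs, ← Complex.exp_nat_mul, hQ, Polynomial.eval_prod]
    congr 1
    · congr 1; push_cast; ring
    · simp
  simp only [heval]
  rw [Polynomial.eval_eq_sum_range' hdeg, Finset.mul_sum]
  symm
  refine Finset.sum_nbij' (fun k => (k + N).toNat) (fun i => (i : ℤ) - N) ?_ ?_ ?_ ?_ ?_
  · intro k hk; simp at hk ⊢; omega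
  · intro k hk; simp at hk ⊢; omega
  · intro k hk; simp at hk ⊢; omega
  · intro k hk; simp
  · intro k hk
    rw [Finset.mem_Icc] at hk
    rw [mul_left_comm, ← Complex.exp_nat_mul, ← Complex.exp_add]
    congr 2
    have : (((k + N).toNat : ℤ) : ℂ) = k + N := by
      rw [Int.toNat_of_nonneg (by omega)]; push_cast; ring
    rw [Int.cast_natCast] at this
    rw [this]
    ring

lemma sin_sq_le_mul_sin_sq {N m : ℕ} {α : ℝ} (hα0 : 0 < α) (hα : α < 1 / 2)
    (hm : m ∈ Icc 1 N) :
    sin ((m + α) * (π / (2 * N + 1))) ^ 2 ≤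
      (m + α) ^ 2 / ((m - 2 * α) * m) * sin ((m - α) * (π / (2 * N + 1))) ^ 2 := by
  rw [Finset.mem_Icc] at hm
  have hm1 : (1 : ℝ) ≤ m := by exact_mod_cast hm.1
  have hmN : (m : ℝ) ≤ N := by exact_mod_cast hm.2
  set u : ℝ := π / (2 * N + 1) with hu
  have hu0 : 0 < u := by positivity
  have huM : (2 * N + 1) * u = π := by rw [hu]; field_simp
  have htop : (m + α) * u ≤ π / 2 := by
    rw [← huM]; nlinarith
  have h := mul_sin_le_mul_sin_s18 (a := (m - α) * u) (b := (m + α) * u)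
    (mul_pos (by linarith) hu0) (by gcongr; linarith) htop
  have h1 : (m - α) * sin ((m + α) * u) ≤ (m + α) * sin ((m - α) * u) :=
    le_of_mul_le_mul_left (by linarith) hu0
  have hs : 0 ≤ sin ((m + α) * u) :=
    sin_nonneg_of_nonneg_of_le_pi (by positivity) (by linarith [pi_pos])
  have h2 := pow_le_pow_left₀ (mul_nonneg (by linarith) hs) h1 2
  have hden : 0 < (m - 2 * α) * m := mul_pos (by linarith) (by linarith)
  rw [div_mul_eq_mul_div, le_div_iff₀ hden]
  nlinarith [mul_nonneg (sq_nonneg α) (sq_nonneg (sin ((m + α) * u)))]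

lemma bmod_sub_ne_zero {N : ℕ} {k l : ℤ} (hk : k ∈ Icc (-(N : ℤ)) (N : ℤ))
    (hl : l ∈ Icc (-(N : ℤ)) (N : ℤ)) (hlk : l ≠ k) : (k - l).bmod (2 * N + 1) ≠ 0 := by
  intro h
  have := bmod_sub_bmod_sub (k := k) hl
  rw [h, sub_zero, bmod_eq_self hk] at this
  exact hlk this.symm

lemma natAbs_bmod_sub_mem_Icc {N : ℕ} {k l : ℤ} (hk : k ∈ Icc (-(N : ℤ)) (N : ℤ))
    (hl : l ∈ Icc (-(N : ℤ)) (N : ℤ)) (hlk : l ≠ k) :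
    ((k - l).bmod (2 * N + 1)).natAbs ∈ Icc 1 N := by
  have h0 := bmod_sub_ne_zero hk hl hlk
  have h1 := bmod_mem_Icc N (k - l)
  rw [Finset.mem_Icc] at h1 ⊢
  omega

lemma natAbs_bmod_sub_comm (N : ℕ) (k l : ℤ) :
    ((k - l).bmod (2 * N + 1)).natAbs = ((l - k).bmod (2 * N + 1)).natAbs := by
  have hmem := bmod_mem_Icc N (l - k)
  have h1 : (k - l).bmod (2 * N + 1) = -(l - k).bmod (2 * N + 1) := by
    have h2 := Int.sub_bmod_bmod (x := 0) (y := l - k) (n := 2 * N + 1)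
    rw [zero_sub, zero_sub, neg_sub] at h2
    rw [← h2, bmod_eq_self]
    rw [Finset.mem_Icc] at hmem ⊢
    omega
  rw [h1, Int.natAbs_neg]

/-- Upper bound for the node polynomial that omits node `j` at an equispaced node `k ≠ j`. -/
lemma abs_prod_sin_mul_le {α : ℝ} (hα0 : 0 < α) (hα : α < 1 / 2) {N : ℕ} {δ : ℤ → ℝ}
    (hδ : ∀ l ∈ Icc (-(N : ℤ)) (N : ℤ), |δ l| ≤ α) {j k : ℤ}
    (hj : j ∈ Icc (-(N : ℤ)) (N : ℤ)) (hk : k ∈ (Icc (-(N : ℤ)) (N : ℤ)).erase j) :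
    |∏ l ∈ (Icc (-(N : ℤ)) (N : ℤ)).erase j, sin (((k - l : ℤ) + δ l) * (π / (2 * N + 1)))| *
        sin ((((j - k).bmod (2 * N + 1)).natAbs + α) * (π / (2 * N + 1))) ≤
      sin (α * (π / (2 * N + 1))) *
        (∏ m ∈ Icc 1 N, sin ((m + α) * (π / (2 * N + 1)))) ^ 2 := by
  obtain ⟨hkj, hkI⟩ := Finset.mem_erase.1 hk
  have hden : 0 ≤ sin ((((j - k).bmod (2 * N + 1)).natAbs + α) * (π / (2 * N + 1))) :=
    (abs_nonneg _).trans (abs_sin_bounds hα (by rw [abs_zero]; exact hα0.le) (j - k)).1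
  have hU := prod_erase_bmod hkI (fun n => sin ((n.natAbs + α) * (π / (2 * N + 1))))
  rw [prod_erase_zero_natAbs N (fun m => sin ((m + α) * (π / (2 * N + 1))))] at hU
  rw [← hU, ← Finset.mul_prod_erase _ _ hk,
    ← Finset.mul_prod_erase _ _ (Finset.mem_erase.2 ⟨hkj.symm, hj⟩),
    natAbs_bmod_sub_comm N k j, Finset.erase_right_comm, abs_mul, Finset.abs_prod]
  have hkk := (abs_sin_bounds (N := N) hα (hδ k hkI) (k - k)).1
  rw [sub_self] at hkk ⊢
  rw [Int.zero_bmod, Int.natAbs_zero, Nat.cast_zero, zero_add α] at hkk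
  have hrest := Finset.prod_le_prod (s := ((Icc (-(N : ℤ)) (N : ℤ)).erase k).erase j)
    (fun l _ => abs_nonneg (sin (((k - l : ℤ) + δ l) * (π / (2 * N + 1)))))
    (fun l hl => (abs_sin_bounds hα
      (hδ l (Finset.mem_of_mem_erase (Finset.mem_of_mem_erase hl))) (k - l)).1)
  refine (mul_le_mul_of_nonneg_right (mul_le_mul hkk hrest
    (Finset.prod_nonneg fun _ _ => abs_nonneg _) ((abs_nonneg _).trans hkk)) hden).trans_eq ?_
  ring

/-- Lower bound for the node polynomial that omits node `j` at the equispaced node `j`. -/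
lemma le_abs_prod_sin {α : ℝ} (hα0 : 0 < α) (hα : α < 1 / 2) {N : ℕ} {δ : ℤ → ℝ}
    (hδ : ∀ l ∈ Icc (-(N : ℤ)) (N : ℤ), |δ l| ≤ α) {j : ℤ}
    (hj : j ∈ Icc (-(N : ℤ)) (N : ℤ)) :
    (∏ m ∈ Icc 1 N, sin ((m - α) * (π / (2 * N + 1)))) ^ 2 ≤
      |∏ l ∈ (Icc (-(N : ℤ)) (N : ℤ)).erase j,
        sin (((j - l : ℤ) + δ l) * (π / (2 * N + 1)))| := by
  have hU := prod_erase_bmod hj (fun n => sin ((n.natAbs - α) * (π / (2 * N + 1))))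
  rw [prod_erase_zero_natAbs N (fun m => sin ((m - α) * (π / (2 * N + 1))))] at hU
  rw [← hU, Finset.abs_prod]
  refine Finset.prod_le_prod (fun l hl => ?_) fun l hl => ?_
  · obtain ⟨hlj, hlI⟩ := Finset.mem_erase.1 hl
    have hmem := Finset.mem_Icc.1 (natAbs_bmod_sub_mem_Icc hj hlI hlj)
    have h1 : (1 : ℝ) ≤ ((j - l).bmod (2 * N + 1)).natAbs := by exact_mod_cast hmem.1
    have h2 : (((j - l).bmod (2 * N + 1)).natAbs : ℝ) ≤ N := by exact_mod_cast hmem.2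
    refine sin_nonneg_of_nonneg_of_le_pi (mul_nonneg (by linarith) (by positivity)) ?_
    rw [mul_div_assoc', div_le_iff₀ (by positivity), mul_comm]
    gcongr
    linarith
  · obtain ⟨hlj, hlI⟩ := Finset.mem_erase.1 hl
    exact (abs_sin_bounds hα (hδ l hlI) _).2 (bmod_sub_ne_zero hj hlI hlj)

/-- The node polynomial that omits node `j`, evaluated at an equispaced node `k ≠ j`, is small
compared with its value at the equispaced node `j`. -/
lemma abs_prod_sin_le {α : ℝ} (hα0 : 0 < α) (hα : α < 1 / 2) {N : ℕ} {δ : ℤ → ℝ}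
    (hδ : ∀ l ∈ Icc (-(N : ℤ)) (N : ℤ), |δ l| ≤ α) {j k : ℤ}
    (hj : j ∈ Icc (-(N : ℤ)) (N : ℤ)) (hk : k ∈ (Icc (-(N : ℤ)) (N : ℤ)).erase j) :
    |∏ l ∈ (Icc (-(N : ℤ)) (N : ℤ)).erase j, sin (((k - l : ℤ) + δ l) * (π / (2 * N + 1)))| ≤
      π * α / 2 * (∏ m ∈ Icc 1 N, ((m : ℝ) + α) ^ 2 / (((m : ℝ) - 2 * α) * m)) *
        (1 / ((j - k).bmod (2 * N + 1)).natAbs) *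
        |∏ l ∈ (Icc (-(N : ℤ)) (N : ℤ)).erase j,
          sin (((j - l : ℤ) + δ l) * (π / (2 * N + 1)))| := by
  have hnum := abs_prod_sin_mul_le hα0 hα hδ hj hk
  have hlow := le_abs_prod_sin hα0 hα hδ hj
  have hratio : (∏ m ∈ Icc 1 N, sin ((m + α) * (π / (2 * N + 1)))) ^ 2 ≤
      (∏ m ∈ Icc 1 N, ((m : ℝ) + α) ^ 2 / (((m : ℝ) - 2 * α) * m)) *
        (∏ m ∈ Icc 1 N, sin ((m - α) * (π / (2 * N + 1)))) ^ 2 := by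
    rw [← Finset.prod_pow, ← Finset.prod_pow, ← Finset.prod_mul_distrib]
    exact Finset.prod_le_prod (fun _ _ => sq_nonneg _)
      fun m hm => sin_sq_le_mul_sin_sq hα0 hα hm
  have hP0 : 0 ≤ ∏ m ∈ Icc 1 N, ((m : ℝ) + α) ^ 2 / (((m : ℝ) - 2 * α) * m) := by
    refine Finset.prod_nonneg fun m hm => ?_
    have hm1 : (1 : ℝ) ≤ m := by exact_mod_cast (Finset.mem_Icc.1 hm).1
    exact div_nonneg (sq_nonneg _) (mul_nonneg (by linarith) (by linarith))
  obtain ⟨hkj, hkI⟩ := Finset.mem_erase.1 hk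
  have hd := Finset.mem_Icc.1 (natAbs_bmod_sub_mem_Icc hj hkI hkj)
  have hA := abs_nonneg (∏ l ∈ (Icc (-(N : ℤ)) (N : ℤ)).erase j,
    sin (((k - l : ℤ) + δ l) * (π / (2 * N + 1))))
  generalize |∏ l ∈ (Icc (-(N : ℤ)) (N : ℤ)).erase j,
    sin (((k - l : ℤ) + δ l) * (π / (2 * N + 1)))| = A at *
  generalize |∏ l ∈ (Icc (-(N : ℤ)) (N : ℤ)).erase j,
    sin (((j - l : ℤ) + δ l) * (π / (2 * N + 1)))| = B at *
  generalize ∏ m ∈ Icc 1 N, ((m : ℝ) + α) ^ 2 / (((m : ℝ) - 2 * α) * m) = P at *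
  generalize ((j - k).bmod (2 * N + 1)).natAbs = d at *
  have hd1 : (1 : ℝ) ≤ d := by exact_mod_cast hd.1
  have hdN : (d : ℝ) ≤ N := by exact_mod_cast hd.2
  have huM : (2 * N + 1) * (π / (2 * N + 1)) = π := by field_simp
  have hu0 : 0 < π / (2 * N + 1) := by positivity
  generalize π / (2 * N + 1) = u at *
  have hjordan : 2 / π * (d * u) ≤ sin ((d + α) * u) := by
    refine le_trans ?_ (mul_le_sin (by positivity) ?_)
    · gcongr
      linarith
    · nlinarith
  have hmain : A * (2 / π * (d * u)) ≤ α * u * (P * B) :=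
    calc A * (2 / π * (d * u)) ≤ A * sin ((d + α) * u) := by gcongr
      _ ≤ sin (α * u) * (∏ m ∈ Icc 1 N, sin ((m + α) * u)) ^ 2 := hnum
      _ ≤ α * u * (P * B) :=
        mul_le_mul (sin_le (by positivity))
          (hratio.trans (mul_le_mul_of_nonneg_left hlow hP0)) (sq_nonneg _) (by positivity)
  have hd0 : (0 : ℝ) < d := by linarith
  calc A ≤ α * u * (P * B) / (2 / π * (d * u)) := (le_div_iff₀ (by positivity)).2 hmain
    _ = π * α / 2 * P * (1 / d) * B := by field_simp

lemma sin_mul_sin_pos {N : ℕ} {n : ℤ} {a b : ℝ} (hn0 : n ≠ 0) (hn : |n| ≤ 2 * N)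
    (ha : |a| < 1) (hb : |b| < 1) :
    0 < sin ((n + a) * (π / (2 * N + 1))) * sin ((n + b) * (π / (2 * N + 1))) := by
  set u : ℝ := π / (2 * N + 1) with hu
  have hu0 : 0 < u := by positivity
  have huM : (2 * N + 1) * u = π := by rw [hu]; field_simp
  rw [abs_lt] at ha hb
  rw [abs_le] at hn
  have hn1 : -(2 * N : ℝ) ≤ n := by exact_mod_cast hn.1
  have hn2 : (n : ℝ) ≤ 2 * N := by exact_mod_cast hn.2
  rcases lt_or_gt_of_ne hn0 with h | h
  · have h1 : (n : ℝ) ≤ -1 := by exact_mod_cast (by omega : n ≤ -1)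
    exact mul_pos_of_neg_of_neg
      (sin_neg_of_neg_of_neg_pi_lt (by nlinarith) (by rw [← huM]; nlinarith))
      (sin_neg_of_neg_of_neg_pi_lt (by nlinarith) (by rw [← huM]; nlinarith))
  · have h1 : (1 : ℝ) ≤ n := by exact_mod_cast (by omega : 1 ≤ n)
    exact mul_pos
      (sin_pos_of_pos_of_lt_pi (by nlinarith) (by rw [← huM]; nlinarith))
      (sin_pos_of_pos_of_lt_pi (by nlinarith) (by rw [← huM]; nlinarith))

/-- if πα·(∏_{m=1}^N (m+α)²/((m−2α)m))·(∑_{d=1}^N 1/d) ≤ 1, then all weights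
of the exact quadrature rule at any α-perturbed nodes are nonnegative. -/
theorem weights_nonneg_of_small (α : ℝ) (hα0 : 0 < α) (hα : α < 1/2)
    (N : ℕ) (hN : 0 < N)
    (hsmall : π * α * (∏ m ∈ Finset.Icc 1 N, ((m : ℝ) + α)^2 / (((m : ℝ) - 2*α) * (m : ℝ))) *
        (∑ d ∈ Finset.Icc 1 N, (1 : ℝ) / (d : ℝ)) ≤ 1)
    (x : ℤ → ℝ) (hx : PerturbedNodes N α x)
    (w : ℤ → ℝ) (hw : ExactQuad N x w) :
    ∀ j ∈ Finset.Icc (-(N:ℤ)) (N:ℤ), 0 ≤ w j := by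
  intro j hj
  set I := Finset.Icc (-(N : ℤ)) (N : ℤ) with hI
  set h : ℝ := 2 * π / (2 * N + 1) with hh
  have hh0 : 0 < h := by positivity
  set P := ∏ m ∈ Finset.Icc 1 N, ((m : ℝ) + α) ^ 2 / (((m : ℝ) - 2 * α) * m) with hP
  -- `δ l` is minus the relative displacement of node `l`
  set δ : ℤ → ℝ := fun l => l - x l / h with hδdef
  have hδ : ∀ l ∈ I, |δ l| ≤ α := by
    intro l hl
    have h1 : x l - l * h = -(δ l) * h := by
      rw [hδdef]; field_simp; ring
    have h2 := hx l hl
    rw [← hh, h1, abs_mul, abs_neg, abs_of_pos hh0] at h2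
    exact le_of_mul_le_mul_right h2 hh0
  set p : ℝ → ℝ := fun t => ∏ l ∈ I.erase j, sin ((t - x l) / 2) with hp
  have hpk : ∀ k : ℤ, p (k * h) =
      ∏ l ∈ I.erase j, sin (((k - l : ℤ) + δ l) * (π / (2 * N + 1))) := by
    intro k
    refine Finset.prod_congr rfl fun l _ => ?_
    have : π / (2 * N + 1) = h / 2 := by rw [hh]; ring
    rw [this]
    congr 1
    rw [hδdef]
    push_cast
    field_simp
    ring
  have hcard : (I.erase j).card = 2 * N := by
    rw [Finset.card_erase_of_mem hj, hI, Int.card_Icc]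
    omega
  have htrig := isTrigPoly_prod_sin hcard x
  have hquad : w j * p (x j) = h * ∑ k ∈ I, p (k * h) := by
    have h1 := hw _ htrig
    rw [htrig.integral_eq, Finset.sum_eq_single_of_mem j hj] at h1
    · apply Complex.ofReal_injective
      rw [hp, hh]
      push_cast at h1 ⊢
      exact h1
    · intro i hi hij
      have : (∏ l ∈ I.erase j, sin ((x i - x l) / 2)) = 0 :=
        Finset.prod_eq_zero (Finset.mem_erase.2 ⟨hij, hi⟩) (by simp)
      rw [this]
      simp
  have hsign : 0 < p (j * h) * p (x j) := by
    rw [hp]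
    simp only
    rw [← Finset.prod_mul_distrib]
    refine Finset.prod_pos fun l hl => ?_
    obtain ⟨hlj, hlI⟩ := Finset.mem_erase.1 hl
    have hl' := Finset.mem_Icc.1 hlI
    have hj' := Finset.mem_Icc.1 hj
    have h1 := hδ l hlI
    have h2 := hδ j hj
    have h3 := abs_sub (δ l) (δ j)
    have := sin_mul_sin_pos (N := N) (n := j - l) (a := δ l) (b := δ l - δ j)
      (sub_ne_zero.2 hlj.symm) (by rw [abs_le]; omega) (by linarith) (by linarith)
    have hu : π / (2 * N + 1) = h / 2 := by rw [hh]; ring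
    rw [hu] at this
    have e1 : ((j - l : ℤ) + δ l) * (h / 2) = (j * h - x l) / 2 := by
      rw [hδdef]; push_cast; field_simp; ring
    have e2 : ((j - l : ℤ) + (δ l - δ j)) * (h / 2) = (x j - x l) / 2 := by
      rw [hδdef]; push_cast; field_simp; ring
    rwa [e1, e2] at this
  have hoff : ∑ k ∈ I.erase j, |p (k * h)| ≤ |p (j * h)| := by
    calc ∑ k ∈ I.erase j, |p (k * h)|
        ≤ ∑ k ∈ I.erase j, π * α / 2 * P * (1 / ((j - k).bmod (2 * N + 1)).natAbs) *
            |p (j * h)| := by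
          refine Finset.sum_le_sum fun k hk => ?_
          rw [hpk, hpk]
          exact abs_prod_sin_le hα0 hα hδ hj hk
      _ = π * α * P * (∑ d ∈ Finset.Icc 1 N, (1 : ℝ) / d) * |p (j * h)| := by
          rw [← Finset.sum_mul, ← Finset.mul_sum,
            sum_erase_bmod_natAbs hj (fun d => 1 / (d : ℝ))]
          ring
      _ ≤ 1 * |p (j * h)| := by gcongr
      _ = |p (j * h)| := one_mul _
  have hfinal : 0 ≤ (∑ k ∈ I, p (k * h)) * p (j * h) := by
    have h1 : |∑ k ∈ I.erase j, p (k * h)| ≤ |p (j * h)| :=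
      (Finset.abs_sum_le_sum_abs _ _).trans hoff
    rw [← Finset.add_sum_erase _ _ hj, add_mul]
    have h2 : |(∑ k ∈ I.erase j, p (k * h)) * p (j * h)| ≤ p (j * h) * p (j * h) := by
      rw [abs_mul, ← abs_mul_abs_self (p (j * h))]
      gcongr
    linarith [neg_abs_le ((∑ k ∈ I.erase j, p (k * h)) * p (j * h))]
  have hprod : 0 ≤ w j * (p (j * h) * p (x j)) := by
    have : w j * (p (j * h) * p (x j)) = h * ((∑ k ∈ I, p (k * h)) * p (j * h)) := by
      linear_combination p (j * h) * hquad
    rw [this]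
    positivity
  exact nonneg_of_mul_nonneg_left hprod hsign
end
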